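/- For all m ≥ 1, the simple centralizer of x_1 in SB_{2+m} has cardinality c_{2+m}(x_1) = 2 · F_{2m−1}. -/

import Mathlib

/-- The defining relations of the positive braid monoid `MB_∞` on generators
`x i`, `i : ℕ+`: the braid relations and the far-commutation relations. -/
def BraidRel : FreeMonoid ℕ+ → FreeMonoid ℕ+ → Prop := fun a b =>
  (∃ i : ℕ+, a = FreeMonoid.of (i + 1) * FreeMonoid.of i * FreeMonoid.of (i + 1) ∧
      b = FreeMonoid.of i * FreeMonoid.of (i + 1) * FreeMonoid.of i) ∨
  (∃ i j : ℕ+, i + 2 ≤ j ∧ a = FreeMonoid.of i * FreeMonoid.of j ∧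
      b = FreeMonoid.of j * FreeMonoid.of i)

/-- The congruence generated by the braid relations. -/
def braidCon : Con (FreeMonoid ℕ+) := conGen BraidRel

/-- The positive braid monoid `MB_∞`. -/
abbrev MB : Type := braidCon.Quotient

/-- The generator `x_i` of `MB_∞`, for `i : ℕ+`. -/
def braidGen (i : ℕ+) : MB := braidCon.mk' (FreeMonoid.of i)

/-- The generator `x_i` of `MB_∞`, indexed by a natural number `i ≥ 1`
(junk value `x_1` for `i = 0`). -/
def X (i : ℕ) : MB := braidGen ⟨max i 1, lt_of_lt_of_le one_pos (le_max_right i 1)⟩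

/-- `x_i` divides `β`: `β = δ * x_i * ε` for some `δ ε ∈ MB_∞`. -/
def GenDvd (i : ℕ) (β : MB) : Prop := ∃ δ ε : MB, β = δ * X i * ε

/-- `x_i` left-divides `β`: `β = x_i * ε` for some `ε ∈ MB_∞`. -/
def GenDvdL (i : ℕ) (β : MB) : Prop := ∃ ε : MB, β = X i * ε

/-- `x_i` right-divides `β`: `β = δ * x_i` for some `δ ∈ MB_∞`. -/
def GenDvdR (i : ℕ) (β : MB) : Prop := ∃ δ : MB, β = δ * X i

/-- The set `SB_n` of simple braids in `MB_n`: products of words in the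
generators `x_1, …, x_{n-1}` in which each generator appears at most once. -/
def SB (n : ℕ) : Set MB :=
  {β | ∃ w : List ℕ, w.Nodup ∧ (∀ i ∈ w, 1 ≤ i ∧ i < n) ∧ β = (w.map X).prod}

/-- The simple centralizer `C_n(β)` of `β` in `SB_n`. -/
def C (n : ℕ) (β : MB) : Set MB := {γ ∈ SB n | β * γ = γ * β}

/-- `c_n(β)`, the cardinality of the simple centralizer `C_n(β)`. -/
noncomputable def c (n : ℕ) (β : MB) : ℕ := (C n β).ncard

/-!
Sending `x_i` to the transposition of the two neighbours it exchanges maps braids to permutations,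
and this map is injective on simple braids. Indeed, in a word without repetitions `x_k` occurs
exactly when the permutation fails to preserve the set of the first `k` points, and if the largest
letter `x_n` occurs it can be pushed to one of the two ends, both ends being possible exactly when
`x_{n-1}` does not occur. The same sets show that `x_k` commutes with a simple braid exactly when
neither `x_{k-1}` nor `x_{k+1}` occurs in it.

Write `N(S)` for the number of simple braids in the generators indexed by `S`. Adding an index `n`
above `S` yields three kinds of braids, `α`, `α x_n` and `x_n α`, the last two coinciding for the
`α` free of `x_{n-1}`; hence `N(S ∪ {n}) = 3 N(S) - N(S \ {n - 1})`. This is the recursion of every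
other Fibonacci number, so that a block of `m` consecutive indices separated from the others
contributes the factor `F_{2m+1}`. The generators that commute with `x_k` form such separated
blocks: those below `x_{k-1}`, `x_k` itself, and those above `x_{k+1}`.
-/

section Words

/-- The braid spelled by a word. The letter `i` stands for `x_{i+1}`, so that every natural number
is the index of a genuine generator. -/
def wordProd (w : List ℕ) : MB := (w.map fun i => X (i + 1)).prod

/-- The simple braids in the generators `x_{i+1}`, `i ∈ S`. -/
def simpleBraids (S : Set ℕ) : Set MB := wordProd '' {w | w.Nodup ∧ ∀ i ∈ w, i ∈ S}

@[simp]
theorem wordProd_nil : wordProd [] = 1 := rfl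

@[simp]
theorem wordProd_cons (i : ℕ) (w : List ℕ) : wordProd (i :: w) = X (i + 1) * wordProd w := rfl

@[simp]
theorem wordProd_append (u v : List ℕ) : wordProd (u ++ v) = wordProd u * wordProd v := by
  simp [wordProd]

theorem commute_X_of_add_two_le {i j : ℕ} (hij : i + 2 ≤ j) : Commute (X (i + 1)) (X (j + 1)) := by
  refine (Con.eq braidCon).2 (ConGen.Rel.of _ _ (.inr ⟨_, _, ?_, rfl, rfl⟩))
  change max (i + 1) 1 + 2 ≤ max (j + 1) 1
  omega

theorem commute_X {i j : ℕ} (hij : i ≠ j + 1 ∧ j ≠ i + 1) : Commute (X (i + 1)) (X (j + 1)) := by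
  rcases lt_trichotomy i j with h | rfl | h
  · exact commute_X_of_add_two_le (by omega)
  · exact Commute.refl _
  · exact (commute_X_of_add_two_le (by omega)).symm

theorem commute_X_wordProd {k : ℕ} {w : List ℕ} (h : ∀ i ∈ w, i ≠ k + 1 ∧ k ≠ i + 1) :
    Commute (X (k + 1)) (wordProd w) :=
  Commute.list_prod_right _ _ <| List.forall_mem_map.2 fun i hi => commute_X (h i hi).symm

theorem simpleBraids_mono {S T : Set ℕ} (h : S ⊆ T) : simpleBraids S ⊆ simpleBraids T :=
  Set.image_mono fun _ hw => ⟨hw.1, fun i hi => h (hw.2 i hi)⟩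

theorem simpleBraids_empty : simpleBraids ∅ = {1} := by
  have : {w : List ℕ | w.Nodup ∧ ∀ i ∈ w, i ∈ (∅ : Set ℕ)} = {[]} := by
    ext w
    simpa [← List.eq_nil_iff_forall_not_mem] using fun h : w = [] => h ▸ List.nodup_nil
  rw [simpleBraids, this, Set.image_singleton, wordProd_nil]

theorem finite_simpleBraids {S : Set ℕ} (hS : S.Finite) : (simpleBraids S).Finite := by
  have := hS.fintype
  refine (Set.finite_range fun w : {w : List S // w.Nodup} => wordProd (w.1.map (↑))).subset ?_
  rintro _ ⟨w, ⟨hw, hwS⟩, rfl⟩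
  lift w to List S using hwS
  exact ⟨⟨w, hw.of_map _⟩, rfl⟩

theorem SB_eq_simpleBraids (n : ℕ) : SB n = simpleBraids {i | i + 1 < n} := by
  ext β
  constructor
  · rintro ⟨w, hw, hwn, rfl⟩
    obtain ⟨w, rfl⟩ : w ∈ Set.range (List.map Nat.succ) := by
      rw [Set.range_list_map, Nat.range_succ]
      exact fun i hi => (hwn i hi).1
    refine ⟨w, ⟨hw.of_map _, by simpa using hwn⟩, ?_⟩
    simp [wordProd, Function.comp_def]
  · rintro ⟨w, ⟨hw, hwn⟩, rfl⟩
    refine ⟨w.map Nat.succ, hw.map Nat.succ_injective, ?_, ?_⟩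
    · simpa using hwn
    · simp [wordProd, Function.comp_def]

end Words

section Permutations

open Equiv MulAction
open scoped Pointwise

theorem swap_braid {α : Type*} [DecidableEq α] {a b c : α}
    (hab : a ≠ b) (hbc : b ≠ c) (hac : a ≠ c) :
    swap b c * swap a b * swap b c = swap a b * swap b c * swap a b := by
  rw [swap_mul_swap_mul_swap hab hac, swap_comm a b, swap_comm b c,
    swap_mul_swap_mul_swap hbc.symm hac.symm, swap_comm]

theorem eq_of_mul_swap_eq_swap_mul {α : Type*} [DecidableEq α] {σ τ : Perm α} {a b : α}
    (hσ : σ b = b) (hτ : τ b = b) (h : σ * swap a b = swap a b * τ) : σ = τ := by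
  have hτa : τ a = a := by
    have hab : b = swap a b (τ a) := by simpa [hσ] using congrArg (· a) h
    rw [← swap_apply_self a b (τ a), ← hab, swap_apply_right]
  rw [← mul_left_inj (swap a b), h, τ.mul_swap_eq_swap_mul, hτa, hτ]

/-- The permutation underlying a braid: `x_{i+1}` exchanges `i` and `i + 1`. -/
def braidPerm : MB →* Perm ℕ :=
  braidCon.lift (FreeMonoid.lift fun i : ℕ+ => swap (i - 1 : ℕ) i) <| Con.conGen_le.2 <| by
    rintro _ _ (⟨i, rfl, rfl⟩ | ⟨i, j, hij, rfl, rfl⟩)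
    · have hi := i.pos
      simpa [Con.ker_rel] using
        swap_braid (a := (i - 1 : ℕ)) (b := i) (c := i + 1) (by omega) (by omega) (by omega)
    · have hi := i.pos
      replace hij : (i + 2 : ℕ) ≤ j := hij
      have : [(i - 1 : ℕ), i, j - 1, j].Nodup := by
        grind
      simpa [Con.ker_rel] using (Perm.disjoint_swap_swap this).commute.eq

theorem braidPerm_braidGen (i : ℕ+) : braidPerm (braidGen i) = swap (i - 1 : ℕ) i :=
  FreeMonoid.lift_eval_of _ _

@[simp]
theorem braidPerm_X (i : ℕ) : braidPerm (X (i + 1)) = swap i (i + 1) := by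
  have : X (i + 1) = braidGen i.succPNat := by simp [X, Nat.succPNat]
  rw [this, braidPerm_braidGen, Nat.succPNat_coe, Nat.succ_eq_add_one, Nat.add_sub_cancel]

theorem braidPerm_wordProd_reverse (w : List ℕ) :
    braidPerm (wordProd w.reverse) = (braidPerm (wordProd w))⁻¹ := by
  induction w with
  | nil => simp
  | cons i w ih => simp [ih]

theorem braidPerm_mem_stabilizer_Iic {k : ℕ} {w : List ℕ} (hk : k ∉ w) :
    braidPerm (wordProd w) ∈ stabilizer (Perm ℕ) (Set.Iic k) := by
  induction w with
  | nil => simp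
  | cons i w ih =>
    rw [List.mem_cons, not_or] at hk
    rw [wordProd_cons, map_mul, braidPerm_X]
    refine mul_mem (swap_mem_stabilizer.2 ?_) (ih hk.2)
    simp only [Set.mem_Iic]
    omega

theorem braidPerm_apply_le_iff {k : ℕ} {w : List ℕ} (hk : k ∉ w) (p : ℕ) :
    braidPerm (wordProd w) p ≤ k ↔ p ≤ k :=
  mem_stabilizer_set.1 (braidPerm_mem_stabilizer_Iic hk) p

theorem braidPerm_mem_stabilizer_Iic_iff {k : ℕ} {w : List ℕ} (hw : w.Nodup) :
    braidPerm (wordProd w) ∈ stabilizer (Perm ℕ) (Set.Iic k) ↔ k ∉ w := by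
  refine ⟨fun h hk => ?_, braidPerm_mem_stabilizer_Iic⟩
  obtain ⟨u, v, rfl⟩ := List.append_of_mem hk
  rw [List.nodup_middle, List.nodup_cons, List.mem_append, not_or] at hw
  rw [wordProd_append, wordProd_cons, map_mul, map_mul, braidPerm_X,
    Subgroup.mul_mem_cancel_left _ (braidPerm_mem_stabilizer_Iic hw.1.1),
    Subgroup.mul_mem_cancel_right _ (braidPerm_mem_stabilizer_Iic hw.1.2),
    swap_mem_stabilizer] at h
  simp at h

theorem mem_iff_mem_of_braidPerm_eq {w w' : List ℕ} (hw : w.Nodup) (hw' : w'.Nodup)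
    (h : braidPerm (wordProd w) = braidPerm (wordProd w')) (k : ℕ) : k ∈ w ↔ k ∈ w' := by
  rw [← not_iff_not, ← braidPerm_mem_stabilizer_Iic_iff hw, h, braidPerm_mem_stabilizer_Iic_iff hw']

theorem not_commute_swap_braidPerm_append_cons {j k : ℕ} {u v : List ℕ}
    (hjk : j = k + 1 ∨ k = j + 1) (hju : j ∉ u) (hjv : j ∉ v) (hkv : k ∉ v) :
    ¬Commute (swap k (k + 1)) (braidPerm (wordProd (u ++ j :: v))) := by
  -- The point `p` moved by both transpositions is fixed by `v` and carried across the cut at `j` by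
  -- the only letter `j`, whereas commutation keeps it in `{k, k + 1}`, on one side of that cut.
  intro hcomm
  set σ := braidPerm (wordProd (u ++ j :: v)) with hσ
  obtain ⟨p, hp⟩ : ∃ p, p = max j k := ⟨_, rfl⟩
  have hvp : braidPerm (wordProd v) p = p := by
    have hj := braidPerm_apply_le_iff hjv p
    have hk := braidPerm_apply_le_iff hkv p
    omega
  have hσp : σ p ≤ j ↔ swap j (j + 1) p ≤ j := by
    simp [hσ, hvp, braidPerm_apply_le_iff hju]
  have hσk : σ p = k ∨ σ p = k + 1 := by
    have hne : swap k (k + 1) (σ p) ≠ σ p := by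
      rw [← Perm.mul_apply, hcomm.eq, Perm.mul_apply, σ.injective.ne_iff, swap_apply_ne_self_iff]
      omega
    exact (swap_apply_ne_self_iff.1 hne).2
  rcases hjk with rfl | rfl
  · obtain rfl : p = k + 1 := by omega
    rw [swap_apply_left] at hσp
    omega
  · obtain rfl : p = j + 1 := by omega
    rw [swap_apply_right] at hσp
    omega

theorem ne_add_one_of_commute_swap_braidPerm {k : ℕ} {w : List ℕ} (hw : w.Nodup)
    (hcomm : Commute (swap k (k + 1)) (braidPerm (wordProd w))) :
    ∀ j ∈ w, j ≠ k + 1 ∧ k ≠ j + 1 := by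
  intro j hj
  by_contra! hjk
  obtain ⟨u, v, rfl⟩ := List.append_of_mem hj
  rw [List.nodup_middle, List.nodup_cons, List.mem_append, not_or] at hw
  obtain ⟨⟨hju, hjv⟩, huv⟩ := hw
  by_cases hkv : k ∈ v
  · have hku : k ∉ u := fun hku => List.disjoint_of_nodup_append huv hku hkv
    -- Reversing the word inverts the permutation and exchanges the roles of `u` and `v`.
    have hcomm' := hcomm.inv_right
    rw [← braidPerm_wordProd_reverse, List.reverse_append, List.reverse_cons,
      List.append_assoc, List.singleton_append] at hcomm'
    exact not_commute_swap_braidPerm_append_cons (by omega) (by simpa) (by simpa) (by simpa) hcomm'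
  · exact not_commute_swap_braidPerm_append_cons (by omega) hju hjv hkv hcomm

theorem commute_X_wordProd_iff {k : ℕ} {w : List ℕ} (hw : w.Nodup) :
    Commute (X (k + 1)) (wordProd w) ↔ ∀ i ∈ w, i ≠ k + 1 ∧ k ≠ i + 1 := by
  refine ⟨fun h => ne_add_one_of_commute_swap_braidPerm hw ?_, commute_X_wordProd⟩
  simpa only [braidPerm_X] using h.map braidPerm

theorem braidPerm_apply_of_forall_lt {n p : ℕ} {w : List ℕ} (hw : ∀ i ∈ w, i < n) (hp : n < p) :
    braidPerm (wordProd w) p = p := by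
  induction w with
  | nil => simp
  | cons i w ih =>
    have := hw i List.mem_cons_self
    rw [wordProd_cons, map_mul, Perm.mul_apply, ih fun j hj => hw j (List.mem_cons_of_mem _ hj),
      braidPerm_X, swap_apply_of_ne_of_ne (by omega) (by omega)]

end Permutations

section Adjoin

open Equiv MulAction
open scoped Pointwise

variable {n : ℕ} {S : Set ℕ}

theorem mul_X_mem_simpleBraids_insert (hS : n ∉ S) {α : MB} (hα : α ∈ simpleBraids S) :
    α * X (n + 1) ∈ simpleBraids (insert n S) := by
  obtain ⟨w, ⟨hw, hwS⟩, rfl⟩ := hα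
  refine ⟨w ++ [n], ⟨List.nodup_append_comm.1 (List.nodup_cons.2 ⟨fun h => hS (hwS n h), hw⟩), ?_⟩,
    by simp⟩
  simp only [List.mem_append, List.mem_singleton]
  rintro i (hi | rfl)
  exacts [.inr (hwS i hi), .inl rfl]

theorem X_mul_mem_simpleBraids_insert (hS : n ∉ S) {α : MB} (hα : α ∈ simpleBraids S) :
    X (n + 1) * α ∈ simpleBraids (insert n S) := by
  obtain ⟨w, ⟨hw, hwS⟩, rfl⟩ := hα
  exact ⟨n :: w, ⟨List.nodup_cons.2 ⟨fun h => hS (hwS n h), hw⟩,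
    List.forall_mem_cons.2 ⟨.inl rfl, fun i hi => .inr (hwS i hi)⟩⟩, rfl⟩

theorem exists_eq_mul_X_or_eq_X_mul (hS : ∀ i ∈ S, i < n) {w : List ℕ} (hw : w.Nodup)
    (hwS : ∀ i ∈ w, i ∈ insert n S) (hn : n ∈ w) :
    ∃ α ∈ simpleBraids S, wordProd w = α * X (n + 1) ∨ wordProd w = X (n + 1) * α := by
  obtain ⟨u, v, rfl⟩ := List.append_of_mem hn
  rw [List.nodup_middle, List.nodup_cons] at hw
  have huvS : ∀ i ∈ u ++ v, i ∈ S := fun i hi =>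
    (hwS i (by grind)).resolve_left fun h => hw.1 (h ▸ hi)
  have hcomm : ∀ t ⊆ u ++ v, (∀ i ∈ t, n ≠ i + 1) → Commute (X (n + 1)) (wordProd t) :=
    fun t ht hnt => commute_X_wordProd fun i hi =>
      ⟨((hS i (huvS i (ht hi))).trans n.lt_succ_self).ne, hnt i hi⟩
  refine ⟨_, ⟨u ++ v, ⟨hw.2, huvS⟩, rfl⟩, ?_⟩
  by_cases hv : ∀ i ∈ v, n ≠ i + 1
  · left
    rw [wordProd_append, wordProd_append, wordProd_cons, mul_assoc,
      (hcomm v (by simp) hv).eq]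
  · right
    have hu : ∀ i ∈ u, n ≠ i + 1 := by
      rintro i hi rfl
      push Not at hv
      obtain ⟨j, hj, hij⟩ := hv
      obtain rfl : i = j := by omega
      exact List.disjoint_of_nodup_append hw.2 hi hj
    rw [wordProd_append, wordProd_append, wordProd_cons, ← mul_assoc, ← mul_assoc,
      (hcomm u (by simp) hu).eq]

theorem simpleBraids_insert (hS : ∀ i ∈ S, i < n) :
    simpleBraids (insert n S) = simpleBraids S ∪
      ((· * X (n + 1)) '' simpleBraids S ∪ (X (n + 1) * ·) '' simpleBraids S) := by
  have hn : n ∉ S := fun h => (hS n h).false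
  refine Set.Subset.antisymm ?_ (Set.union_subset (simpleBraids_mono (Set.subset_insert n S))
    (Set.union_subset (Set.image_subset_iff.2 fun _ => mul_X_mem_simpleBraids_insert hn)
      (Set.image_subset_iff.2 fun _ => X_mul_mem_simpleBraids_insert hn)))
  rintro _ ⟨w, ⟨hw, hwS⟩, rfl⟩
  by_cases hnw : n ∈ w
  · obtain ⟨α, hα, h | h⟩ := exists_eq_mul_X_or_eq_X_mul hS hw hwS hnw
    exacts [.inr (.inl ⟨α, hα, h.symm⟩), .inr (.inr ⟨α, hα, h.symm⟩)]
  · exact .inl ⟨w, ⟨hw, fun i hi => (hwS i hi).resolve_left fun h => hnw (h ▸ hi)⟩, rfl⟩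

theorem braidPerm_mem_stabilizer_Iic_of_mem (hS : ∀ i ∈ S, i < n) {α : MB}
    (hα : α ∈ simpleBraids S) : braidPerm α ∈ stabilizer (Perm ℕ) (Set.Iic n) := by
  obtain ⟨w, ⟨-, hwS⟩, rfl⟩ := hα
  exact braidPerm_mem_stabilizer_Iic fun h => (hS n (hwS n h)).false

theorem disjoint_simpleBraids_mul_X_union_X_mul (hS : ∀ i ∈ S, i < n) :
    Disjoint (simpleBraids S)
      ((· * X (n + 1)) '' simpleBraids S ∪ (X (n + 1) * ·) '' simpleBraids S) := by
  refine Set.disjoint_left.2 fun β hβ hβ' => ?_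
  have hcross : braidPerm (X (n + 1)) ∉ stabilizer (Perm ℕ) (Set.Iic n) := by
    rw [braidPerm_X, swap_mem_stabilizer]
    simp
  refine hcross ?_
  replace hβ := braidPerm_mem_stabilizer_Iic_of_mem hS hβ
  rcases hβ' with ⟨α, hα, rfl⟩ | ⟨α, hα, rfl⟩ <;>
    replace hα := braidPerm_mem_stabilizer_Iic_of_mem hS hα <;>
    rw [map_mul] at hβ
  exacts [(Subgroup.mul_mem_cancel_left _ hα).1 hβ, (Subgroup.mul_mem_cancel_right _ hα).1 hβ]

theorem commute_X_of_mem_simpleBraids {β : MB} (hβ : β ∈ simpleBraids {i ∈ S | i + 1 < n}) :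
    Commute (X (n + 1)) β := by
  obtain ⟨w, ⟨-, hw⟩, rfl⟩ := hβ
  refine commute_X_wordProd fun i hi => ?_
  have := (hw i hi).2
  omega

theorem braidPerm_eq_and_mem_of_mul_X_eq_X_mul (hS : ∀ i ∈ S, i < n) {α β : MB}
    (hα : α ∈ simpleBraids S) (hβ : β ∈ simpleBraids S)
    (h : braidPerm (α * X (n + 1)) = braidPerm (X (n + 1) * β)) :
    braidPerm α = braidPerm β ∧ β ∈ simpleBraids {i ∈ S | i + 1 < n} := by
  obtain ⟨u, ⟨-, huS⟩, rfl⟩ := hα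
  obtain ⟨w, ⟨hw, hwS⟩, rfl⟩ := hβ
  rw [map_mul, map_mul, braidPerm_X] at h
  have heq := eq_of_mul_swap_eq_swap_mul
    (braidPerm_apply_of_forall_lt (fun i hi => hS i (huS i hi)) n.lt_succ_self)
    (braidPerm_apply_of_forall_lt (fun i hi => hS i (hwS i hi)) n.lt_succ_self) h
  rw [heq] at h
  refine ⟨heq, w, ⟨hw, fun i hi => ⟨hwS i hi, ?_⟩⟩, rfl⟩
  have := hS i (hwS i hi)
  have := (ne_add_one_of_commute_swap_braidPerm hw h.symm i hi).2
  omega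

theorem braidPerm_injOn_simpleBraids_Iio (n : ℕ) :
    Set.InjOn braidPerm (simpleBraids (Set.Iio n)) := by
  induction n with
  | zero => simp [simpleBraids_empty]
  | succ n ih =>
    have hlt : ∀ i ∈ Set.Iio n, i < n := fun _ => id
    have hmixed {α β : MB} (hα : α ∈ simpleBraids (Set.Iio n)) (hβ : β ∈ simpleBraids (Set.Iio n))
        (h : braidPerm (α * X (n + 1)) = braidPerm (X (n + 1) * β)) :
        α * X (n + 1) = X (n + 1) * β := by
      obtain ⟨heq, hfar⟩ := braidPerm_eq_and_mem_of_mul_X_eq_X_mul hlt hα hβ h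
      rw [ih hα hβ heq, (commute_X_of_mem_simpleBraids hfar).eq]
    rintro _ ⟨w, ⟨hw, hwn⟩, rfl⟩ _ ⟨w', ⟨hw', hwn'⟩, rfl⟩ h
    have hmem := mem_iff_mem_of_braidPerm_eq hw hw' h n
    have hinsert : Set.Iio (n + 1) = insert n (Set.Iio n) := Order.Iio_succ_eq_insert n
    rw [hinsert] at hwn hwn'
    by_cases hnw : n ∈ w
    · obtain ⟨α, hα, e | e⟩ := exists_eq_mul_X_or_eq_X_mul hlt hw hwn hnw <;>
        obtain ⟨β, hβ, e' | e'⟩ := exists_eq_mul_X_or_eq_X_mul hlt hw' hwn' (hmem.1 hnw) <;>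
        rw [e, e'] at h ⊢
      · rw [ih hα hβ (mul_right_cancel (by simpa only [map_mul] using h))]
      · exact hmixed hα hβ h
      · exact (hmixed hβ hα h.symm).symm
      · rw [ih hα hβ (mul_left_cancel (by simpa only [map_mul] using h))]
    · refine ih ⟨w, ⟨hw, fun i hi => (hwn i hi).resolve_left ?_⟩, rfl⟩
        ⟨w', ⟨hw', fun i hi => (hwn' i hi).resolve_left ?_⟩, rfl⟩ h
      · exact fun h => hnw (h ▸ hi)
      · exact fun h => hnw (hmem.2 (h ▸ hi))

theorem braidPerm_injOn_simpleBraids (S : Set ℕ) : Set.InjOn braidPerm (simpleBraids S) := by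
  rintro _ ⟨w, ⟨hw, -⟩, rfl⟩ _ ⟨w', ⟨hw', -⟩, rfl⟩ h
  obtain ⟨n, hn⟩ := (w ++ w').toFinset.exists_nat_subset_range
  have hlt : ∀ i ∈ w ++ w', i < n := fun i hi => Finset.mem_range.1 (hn (List.mem_toFinset.2 hi))
  exact braidPerm_injOn_simpleBraids_Iio n
    ⟨w, ⟨hw, fun i hi => hlt i (List.mem_append_left _ hi)⟩, rfl⟩
    ⟨w', ⟨hw', fun i hi => hlt i (List.mem_append_right _ hi)⟩, rfl⟩ h

theorem injOn_mul_right_simpleBraids (γ : MB) (S : Set ℕ) :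
    Set.InjOn (· * γ) (simpleBraids S) := fun α hα β hβ h =>
  braidPerm_injOn_simpleBraids S hα hβ <| mul_right_cancel <| by
    simpa only [map_mul] using congrArg braidPerm h

theorem injOn_mul_left_simpleBraids (γ : MB) (S : Set ℕ) :
    Set.InjOn (γ * ·) (simpleBraids S) := fun α hα β hβ h =>
  braidPerm_injOn_simpleBraids S hα hβ <| mul_left_cancel <| by
    simpa only [map_mul] using congrArg braidPerm h

theorem mul_X_inter_X_mul_simpleBraids (hS : ∀ i ∈ S, i < n) :
    (· * X (n + 1)) '' simpleBraids S ∩ (X (n + 1) * ·) '' simpleBraids S =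
      (X (n + 1) * ·) '' simpleBraids {i ∈ S | i + 1 < n} := by
  ext γ
  constructor
  · rintro ⟨⟨α, hα, rfl⟩, β, hβ, h⟩
    exact ⟨β, (braidPerm_eq_and_mem_of_mul_X_eq_X_mul hS hα hβ (congrArg braidPerm h.symm)).2, h⟩
  · rintro ⟨β, hβ, rfl⟩
    have hβS := simpleBraids_mono (Set.sep_subset S _) hβ
    exact ⟨⟨β, hβS, (commute_X_of_mem_simpleBraids hβ).symm.eq⟩, β, hβS, rfl⟩

end Adjoin

section Count

theorem ncard_simpleBraids_insert {n : ℕ} {S : Set ℕ} (hS : ∀ i ∈ S, i < n) :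
    (simpleBraids (insert n S)).ncard + (simpleBraids {i ∈ S | i + 1 < n}).ncard =
      3 * (simpleBraids S).ncard := by
  have hfin : (simpleBraids S).Finite := finite_simpleBraids ((Set.finite_Iio n).subset hS)
  have hinter := Set.ncard_union_add_ncard_inter _ _ (hfin.image (· * X (n + 1)))
    (hfin.image (X (n + 1) * ·))
  rw [mul_X_inter_X_mul_simpleBraids hS, (injOn_mul_right_simpleBraids _ S).ncard_image,
    (injOn_mul_left_simpleBraids _ S).ncard_image,
    (injOn_mul_left_simpleBraids _ _).ncard_image] at hinter
  rw [simpleBraids_insert hS, Set.ncard_union_eq (disjoint_simpleBraids_mul_X_union_X_mul hS) hfin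
    ((hfin.image _).union (hfin.image _)), add_assoc, hinter]
  ring

theorem fib_add_four_add_fib (n : ℕ) : Nat.fib (n + 4) + Nat.fib n = 3 * Nat.fib (n + 2) := by
  grind [Nat.fib_add_two]

theorem ncard_simpleBraids_union_Ico {B : Set ℕ} {a : ℕ} (hB : ∀ i ∈ B, i + 1 < a) (m : ℕ) :
    (simpleBraids (B ∪ Set.Ico a (a + m))).ncard =
      (simpleBraids B).ncard * Nat.fib (2 * m + 1) := by
  have hlt (m : ℕ) : ∀ i ∈ B ∪ Set.Ico a (a + m), i < a + m := fun i hi => by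
    have := hB i
    grind
  have hinsert (m : ℕ) : insert (a + m) (B ∪ Set.Ico a (a + m)) = B ∪ Set.Ico a (a + (m + 1)) := by
    grind
  induction m using Nat.twoStepInduction with
  | zero => simp
  | one =>
    have hfar : {i ∈ B ∪ Set.Ico a (a + 0) | i + 1 < a + 0} = B := by grind
    have hrec := ncard_simpleBraids_insert (hlt 0)
    rw [hinsert, hfar, add_zero, Set.Ico_self, Set.union_empty, zero_add] at hrec
    have hfib : Nat.fib (2 * 1 + 1) = 2 := rfl
    rw [hfib]
    omega
  | more m ihm ihm' =>
    have hfar : {i ∈ B ∪ Set.Ico a (a + (m + 1)) | i + 1 < a + (m + 1)} =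
        B ∪ Set.Ico a (a + m) := by
      grind
    have hrec := ncard_simpleBraids_insert (hlt (m + 1))
    rw [hinsert, hfar, ihm, ihm'] at hrec
    refine Nat.add_right_cancel (hrec.trans ?_)
    calc 3 * ((simpleBraids B).ncard * Nat.fib (2 * (m + 1) + 1))
        = (simpleBraids B).ncard * (3 * Nat.fib (2 * m + 1 + 2)) := by ring_nf
      _ = (simpleBraids B).ncard * Nat.fib (2 * (m + 2) + 1) +
          (simpleBraids B).ncard * Nat.fib (2 * m + 1) := by
        rw [← fib_add_four_add_fib, mul_add]
        ring_nf

theorem ncard_simpleBraids_Iio (n : ℕ) :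
    (simpleBraids (Set.Iio n)).ncard = Nat.fib (2 * n + 1) := by
  have h := ncard_simpleBraids_union_Ico (B := ∅) (a := 0) (by simp) n
  rwa [Set.empty_union, zero_add, ← Nat.bot_eq_zero, Set.Ico_bot, simpleBraids_empty,
    Set.ncard_singleton, one_mul] at h

end Count

section Centralizer

theorem C_X_eq_simpleBraids (n k : ℕ) :
    C n (X (k + 1)) = simpleBraids {i | i + 1 < n ∧ i ≠ k + 1 ∧ k ≠ i + 1} := by
  rw [C, SB_eq_simpleBraids]
  ext β
  constructor
  · rintro ⟨⟨w, ⟨hw, hwn⟩, rfl⟩, hcomm⟩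
    exact ⟨w, ⟨hw, fun i hi => ⟨hwn i hi, (commute_X_wordProd_iff hw).1 hcomm i hi⟩⟩, rfl⟩
  · rintro ⟨w, ⟨hw, hwn⟩, rfl⟩
    exact ⟨⟨w, ⟨hw, fun i hi => (hwn i hi).1⟩, rfl⟩, commute_X_wordProd fun i hi => (hwn i hi).2⟩

-- The truncated differences are intended: an empty block of generators contributes `F_1 = 1`.
theorem card_centralizer_x1_general {n k : ℕ} (hk : 1 ≤ k) (hkn : k < n) :
    c n (X k) = 2 * Nat.fib (2 * (k - 2) + 1) * Nat.fib (2 * (n - k - 2) + 1) := by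
  obtain ⟨j, rfl⟩ := Nat.exists_eq_add_of_le' hk
  have hsplit : {i | i + 1 < n ∧ i ≠ j + 1 ∧ j ≠ i + 1} =
      Set.Iio (j - 1) ∪ Set.Ico j (j + 1) ∪
        Set.Ico (j + 2) (j + 2 + (n - (j + 1) - 2)) := by
    ext i
    simp only [Set.mem_ofPred_eq, Set.mem_union, Set.mem_Iio, Set.mem_Ico]
    omega
  have hleft : ∀ i ∈ Set.Iio (j - 1), i + 1 < j := by grind
  have hright : ∀ i ∈ Set.Iio (j - 1) ∪ Set.Ico j (j + 1), i + 1 < j + 2 := by grind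
  rw [c, C_X_eq_simpleBraids, hsplit, ncard_simpleBraids_union_Ico hright,
    ncard_simpleBraids_union_Ico hleft, ncard_simpleBraids_Iio]
  have hfib : Nat.fib (2 * 1 + 1) = 2 := rfl
  rw [hfib, mul_comm _ 2, Nat.succ_sub_succ]

end Centralizer

/-- Proposition 1.5 a): `c_{2+m}(x_1) = 2 · F_{2m-1}` for all `m ≥ 1`. -/
theorem card_centralizer_x1 (m : ℕ) (hm : 1 ≤ m) :
    c (2 + m) (X 1) = 2 * Nat.fib (2 * m - 1) := by
  have hindex : 2 * (2 + m - 1 - 2) + 1 = 2 * m - 1 := by omega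
  rw [card_centralizer_x1_general le_rfl (by omega), hindex]
  simp
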